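/- Let M be an acyclic matching on X and let M' = { (σ ∪ {w_1} → σ) : σ ∈ X } ∪ { (σ ∪ {w_i} → τ ∪ {w_i}) : (σ → τ) ∈ M, 2 ≤ i ≤ n+1 }. Then the set of critical simplices of M' is exactly { {w_1} } ∪ { σ ∪ {w_i} : σ is a critical simplex of M or σ = ∅, 2 ≤ i ≤ n+1 }. In particular, if every critical simplex of M has dimension ≤ k, then every critical simplex of M' has dimension ≤ k+1. -/

import Mathlib

open Finset

/-- A (finite) simplicial complex: a finite collection of nonempty finite sets
    of vertices, closed under taking nonempty subsets. -/
def IsComplex {U : Type*} [DecidableEq U] (X : Finset (Finset U)) : Prop :=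
  (∀ σ ∈ X, σ ≠ ∅) ∧ ∀ σ ∈ X, ∀ τ : Finset U, τ ⊆ σ → τ ≠ ∅ → τ ∈ X

/-- Arc of the Hasse diagram `H(X)`: from `σ` to `τ` iff `τ ⊂ σ` and
    `dim σ = dim τ + 1` (i.e. `|σ| = |τ| + 1`). -/
def HasseArc {U : Type*} [DecidableEq U] (X : Finset (Finset U)) (σ τ : Finset U) : Prop :=
  σ ∈ X ∧ τ ∈ X ∧ τ ⊂ σ ∧ σ.card = τ.card + 1

/-- A matching on `X`: a set of arcs of `H(X)` such that every simplex of `X`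
    belongs to at most one arc. -/
def IsMatching {U : Type*} [DecidableEq U] (X : Finset (Finset U))
    (M : Set (Finset U × Finset U)) : Prop :=
  (∀ p ∈ M, HasseArc X p.1 p.2) ∧
  ∀ p ∈ M, ∀ q ∈ M, p ≠ q → p.1 ≠ q.1 ∧ p.1 ≠ q.2 ∧ p.2 ≠ q.1 ∧ p.2 ≠ q.2

/-- Arc of the modified Hasse diagram `H(X)^M`, obtained from `H(X)` by
    reversing the direction of each arc in `M`. -/
def ModArc {U : Type*} [DecidableEq U] (X : Finset (Finset U))
    (M : Set (Finset U × Finset U)) (a b : Finset U) : Prop :=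
  (HasseArc X a b ∧ (a, b) ∉ M) ∨ (b, a) ∈ M

/-- An acyclic matching: a matching such that `H(X)^M` has no directed cycle. -/
def IsAcyclicMatching {U : Type*} [DecidableEq U] (X : Finset (Finset U))
    (M : Set (Finset U × Finset U)) : Prop :=
  IsMatching X M ∧ ∀ a : Finset U, ¬ Relation.TransGen (ModArc X M) a a

/-- `σ` is a critical simplex of the matching `M` on `X`: it belongs to no arc of `M`. -/
def IsCritical {U : Type*} [DecidableEq U] (X : Finset (Finset U))
    (M : Set (Finset U × Finset U)) (σ : Finset U) : Prop :=
  σ ∈ X ∧ ∀ p ∈ M, p.1 ≠ σ ∧ p.2 ≠ σ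

/-- `X` has dimension exactly `d` (the dimension of a simplex `σ` is `|σ| - 1`). -/
def HasDim {U : Type*} [DecidableEq U] (X : Finset (Finset U)) (d : ℕ) : Prop :=
  (∀ σ ∈ X, σ.card ≤ d + 1) ∧ ∃ σ ∈ X, σ.card = d + 1

/-- The complex `X' = X ∪ { σ ∪ {wᵢ} : σ ∈ X ∪ {∅}, i = 1, …, n+1 }`, obtained
    from `X` by attaching `n+1` cones with apexes `w 0, …, w n`. -/
def coneCx {U : Type*} [DecidableEq U] (X : Finset (Finset U)) (n : ℕ)
    (w : Fin (n + 1) → U) : Finset (Finset U) :=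
  X ∪ Finset.univ.biUnion (fun i : Fin (n + 1) =>
    (insert (∅ : Finset U) X).image (fun σ => insert (w i) σ))

/-- The matching `M'` on `X'`:
    `M' = { (σ ∪ {w₁} → σ) : σ ∈ X } ∪ { (σ ∪ {wᵢ} → τ ∪ {wᵢ}) : (σ → τ) ∈ M, 2 ≤ i ≤ n+1 }`. -/
def coneMatch {U : Type*} [DecidableEq U] (X : Finset (Finset U))
    (M : Set (Finset U × Finset U)) (n : ℕ) (w : Fin (n + 1) → U) :
    Set (Finset U × Finset U) :=
  {p | ∃ σ ∈ X, p = (insert (w 0) σ, σ)} ∪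
  {p | ∃ q ∈ M, ∃ i : Fin (n + 1), i ≠ 0 ∧ p = (insert (w i) q.1, insert (w i) q.2)}

/-!
Every `σ ∈ X` is matched with its cone `σ ∪ {w 0}`, which leaves only the apex `{w 0}` over the
first cone. Since no apex is a vertex of `X`, a simplex `σ ∪ {w i}` with `i ≠ 0` determines `σ`
and the apex `w i`, so the matching on the simplices containing `w i` is a copy of `M` in which
the only additional simplex, the apex `{w i}`, is unmatched.
-/

theorem insert_eq_insert_iff_of_notMem {U : Type*} [DecidableEq U] {a b : U} {s t : Finset U}
    (has : a ∉ s) (hat : a ∉ t) : insert a s = insert b t ↔ a = b ∧ s = t := by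
  refine ⟨fun h => ?_, fun ⟨hab, hst⟩ => hab ▸ hst ▸ rfl⟩
  obtain rfl : a = b := (mem_insert.1 (h ▸ mem_insert_self a s)).resolve_right hat
  exact ⟨rfl, insert_erase_invOn.2.injOn has hat h⟩

section Cone

variable {U : Type*} [DecidableEq U] {X : Finset (Finset U)} {M : Set (Finset U × Finset U)}
  {n : ℕ} {w : Fin (n + 1) → U} {i : Fin (n + 1)} {σ ρ : Finset U}

theorem mem_coneCx :
    ρ ∈ coneCx X n w ↔ ρ ∈ X ∨ ∃ i, ∃ σ, (σ ∈ X ∨ σ = ∅) ∧ ρ = insert (w i) σ := by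
  simp only [coneCx, mem_union, mem_biUnion, mem_univ, true_and, mem_image, mem_insert,
    or_comm (a := _ = ∅), eq_comm (a := ρ)]

theorem forall_mem_coneMatch {P : Finset U × Finset U → Prop} :
    (∀ p ∈ coneMatch X M n w, P p) ↔ (∀ σ ∈ X, P (insert (w 0) σ, σ)) ∧
      ∀ q ∈ M, ∀ i ≠ 0, P (insert (w i) q.1, insert (w i) q.2) := by
  constructor
  · exact fun h => ⟨fun σ hσ => h _ (.inl ⟨σ, hσ, rfl⟩),
      fun q hq i hi => h _ (.inr ⟨q, hq, i, hi, rfl⟩)⟩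
  · rintro ⟨hX, hM⟩ p (⟨σ, hσ, rfl⟩ | ⟨q, hq, i, hi, rfl⟩)
    exacts [hX σ hσ, hM q hq i hi]

theorem eq_or_exists_of_isCritical_coneMatch
    (hρ : IsCritical (coneCx X n w) (coneMatch X M n w) ρ) :
    ρ = {w 0} ∨ ∃ i : Fin (n + 1), i ≠ 0 ∧ ∃ σ : Finset U,
      (IsCritical X M σ ∨ σ = ∅) ∧ ρ = insert (w i) σ := by
  obtain ⟨hmem, hunmatched⟩ := hρ
  obtain ⟨hbase, hside⟩ := forall_mem_coneMatch.1 hunmatched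
  obtain hρX | ⟨i, σ, hσ, rfl⟩ := mem_coneCx.1 hmem
  · exact absurd rfl (hbase ρ hρX).2
  obtain rfl | hi := eq_or_ne i 0
  · obtain hσX | rfl := hσ
    · exact absurd rfl (hbase σ hσX).1
    · exact .inl rfl
  · refine .inr ⟨i, hi, σ, hσ.imp_left fun hσX => ⟨hσX, fun q hq => ?_⟩, rfl⟩
    exact (hside q hq i hi).imp (mt (congrArg (insert (w i)))) (mt (congrArg (insert (w i))))

theorem card_le_of_isCritical_coneMatch {m : ℕ} (hm : ∀ σ, IsCritical X M σ → #σ ≤ m)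
    (hρ : IsCritical (coneCx X n w) (coneMatch X M n w) ρ) : #ρ ≤ m + 1 := by
  obtain rfl | ⟨i, -, σ, hσ, rfl⟩ := eq_or_exists_of_isCritical_coneMatch hρ
  · simp
  have hσm : #σ ≤ m := by
    obtain hσ | rfl := hσ
    exacts [hm σ hσ, by simp]
  exact (card_insert_le _ _).trans (Nat.add_le_add_right hσm 1)

theorem isCritical_coneMatch_insert (hwX : ∀ i, ∀ σ ∈ X, w i ∉ σ)
    (hMX : M ⊆ (X : Set (Finset U)) ×ˢ (X : Set (Finset U))) (hσ : σ ∈ X ∨ σ = ∅)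
    (hi : w i = w 0 → σ ∉ X) (hunmatched : ∀ q ∈ M, q.1 ≠ σ ∧ q.2 ≠ σ) :
    IsCritical (coneCx X n w) (coneMatch X M n w) (insert (w i) σ) := by
  have insert_eq_iff (j : Fin (n + 1)) {τ : Finset U} (hτ : τ ∈ X) :
      insert (w j) τ = insert (w i) σ ↔ w j = w i ∧ τ = σ := by
    refine insert_eq_insert_iff_of_notMem (hwX j τ hτ) ?_
    obtain hσX | rfl := hσ
    exacts [hwX j σ hσX, notMem_empty _]
  refine ⟨mem_coneCx.2 (.inr ⟨i, σ, hσ, rfl⟩), forall_mem_coneMatch.2 ⟨fun τ hτ => ⟨?_, ?_⟩,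
    fun q hq j _ => ⟨fun h => ?_, fun h => ?_⟩⟩⟩
  · rw [Ne, insert_eq_iff 0 hτ]
    rintro ⟨h0, rfl⟩
    exact hi h0.symm hτ
  · rintro rfl
    exact hwX i _ hτ (mem_insert_self _ _)
  · exact (hunmatched q hq).1 ((insert_eq_iff j (hMX hq).1).1 h).2
  · exact (hunmatched q hq).2 ((insert_eq_iff j (hMX hq).2).1 h).2

theorem coneMatch_critical_general (w : Fin (n + 1) → U) (hX : ∅ ∉ X)
    (hw : ∀ i ≠ 0, w i ≠ w 0) (hwX : ∀ i, ∀ σ ∈ X, w i ∉ σ)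
    (hMX : M ⊆ (X : Set (Finset U)) ×ˢ (X : Set (Finset U))) (m : ℕ) :
    (∀ ρ : Finset U, IsCritical (coneCx X n w) (coneMatch X M n w) ρ ↔
      (ρ = {w 0} ∨ ∃ i : Fin (n + 1), i ≠ 0 ∧ ∃ σ : Finset U,
        (IsCritical X M σ ∨ σ = ∅) ∧ ρ = insert (w i) σ)) ∧
    ((∀ σ, IsCritical X M σ → #σ ≤ m) →
      ∀ ρ, IsCritical (coneCx X n w) (coneMatch X M n w) ρ → #ρ ≤ m + 1) := by
  have empty_unmatched (q) (hq : q ∈ M) : q.1 ≠ ∅ ∧ q.2 ≠ ∅ :=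
    ⟨ne_of_mem_of_not_mem (hMX hq).1 hX, ne_of_mem_of_not_mem (hMX hq).2 hX⟩
  have apex_critical (i) : IsCritical (coneCx X n w) (coneMatch X M n w) (insert (w i) ∅) :=
    isCritical_coneMatch_insert hwX hMX (.inr rfl) (fun _ => hX) empty_unmatched
  refine ⟨fun ρ => ⟨eq_or_exists_of_isCritical_coneMatch, ?_⟩,
    fun hm ρ hρ => card_le_of_isCritical_coneMatch hm hρ⟩
  rintro (rfl | ⟨i, hi, σ, hσ | rfl, rfl⟩)
  · exact apex_critical 0
  · exact isCritical_coneMatch_insert hwX hMX (.inl hσ.1) (absurd · (hw i hi)) hσ.2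
  · exact apex_critical i

end Cone

/-- the critical simplices of `M'` are exactly
    `{w₁}` together with the simplices `σ ∪ {wᵢ}` for `σ` critical for `M` or `σ = ∅`
    and `2 ≤ i ≤ n+1`; in particular if all critical simplices of `M` have dimension
    ≤ k then all critical simplices of `M'` have dimension ≤ k+1. -/
theorem coneMatch_critical {U : Type*} [DecidableEq U] (d k n : ℕ)
    (X : Finset (Finset U)) (hX : IsComplex X) (hd : HasDim X d)
    (hn : X.card = n) (hn1 : 1 ≤ n)
    (w : Fin (n + 1) → U) (hw : Function.Injective w)
    (hwX : ∀ i : Fin (n + 1), ∀ σ ∈ X, w i ∉ σ)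
    (M : Set (Finset U × Finset U)) (hM : IsAcyclicMatching X M) :
    (∀ ρ : Finset U, IsCritical (coneCx X n w) (coneMatch X M n w) ρ ↔
      (ρ = {w 0} ∨ ∃ i : Fin (n + 1), i ≠ 0 ∧ ∃ σ : Finset U,
        (IsCritical X M σ ∨ σ = ∅) ∧ ρ = insert (w i) σ)) ∧
    ((∀ σ, IsCritical X M σ → σ.card ≤ k + 1) →
      ∀ ρ, IsCritical (coneCx X n w) (coneMatch X M n w) ρ → ρ.card ≤ k + 2) :=
  coneMatch_critical_general w (fun h => hX.1 ∅ h rfl) (fun _ hi => hw.ne hi) hwX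
    (fun p hp => ⟨(hM.1.1 p hp).1, (hM.1.1 p hp).2.1⟩) (k + 1)
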